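/- Suppose φ : ℝ → ℝ is bounded, not identically zero, φ' is absolutely continuous with φ'' = Vφ almost everywhere, and φ is either even (φ(−x) = φ(x) for all x) or odd (φ(−x) = −φ(x) for all x). Then V is even almost everywhere: V(−x) = V(x) for almost every x ∈ ℝ. -/

import Mathlib

open MeasureTheory Filter Topology Set

noncomputable def jap (x : ℝ) : ℝ := Real.sqrt (1 + x ^ 2)

/-!
A nontrivial solution determines its potential almost everywhere: `φ'` is a.e. differentiable with
derivative `Vφ`, and `φ` vanishes only on a null set, because a common zero of `φ` and `φ'` would
force `φ = 0` by Grönwall's inequality, so that all zeros of `φ` are isolated. If `φ` is even or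
odd, then `φ` also solves the equation with the reflected potential `x ↦ V (-x)`.
-/

theorem one_le_jap (x : ℝ) : 1 ≤ jap x :=
  Real.one_le_sqrt.2 (le_add_of_nonneg_right (sq_nonneg x))

theorem integrable_of_integrable_jap_mul_norm {E : Type*} [NormedAddCommGroup E] {μ : Measure ℝ}
    {f : ℝ → E} (hf : AEStronglyMeasurable f μ) (hint : Integrable (fun x => jap x * ‖f x‖) μ) :
    Integrable f μ := by
  refine hint.mono' hf (ae_of_all _ fun x => ?_)
  exact le_mul_of_one_le_left (norm_nonneg _) (one_le_jap x)

theorem intervalIntegrable_of_locallyIntegrable {E : Type*} [NormedAddCommGroup E] {μ : Measure ℝ}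
    {f : ℝ → E} (hf : LocallyIntegrable f μ) (a b : ℝ) : IntervalIntegrable f μ a b :=
  (hf.integrableOn_isCompact isCompact_uIcc).intervalIntegrable

theorem locallyIntegrable_norm {X E : Type*} [TopologicalSpace X] [MeasurableSpace X]
    [NormedAddCommGroup E] {μ : Measure X} {f : X → E} (hf : LocallyIntegrable f μ) :
    LocallyIntegrable (fun x => ‖f x‖) μ :=
  fun x => (hf x).norm

section Gronwall

variable {E : Type*} [NormedAddCommGroup E] {μ : Measure ℝ} [NullSingletonClass μ]
  {g : ℝ → ℝ} {u : ℝ → E}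

theorem eventually_eq_zero_of_norm_le_integral (hg : LocallyIntegrable g μ) (hu : Continuous u)
    {a : ℝ} (h : ∀ x, ‖u x‖ ≤ |∫ t in a..x, g t * ‖u t‖ ∂μ|) : ∀ᶠ x in 𝓝 a, u x = 0 := by
  have hgi : ∀ x y, IntervalIntegrable (fun t => ‖g t‖) μ x y :=
    intervalIntegrable_of_locallyIntegrable (locallyIntegrable_norm hg)
  have hsmall : ∀ᶠ x in 𝓝 a, |∫ t in a..x, ‖g t‖ ∂μ| < 1 := by
    have hcont := (intervalIntegral.continuous_primitive hgi a).abs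
    exact (hcont.tendsto' a 0 (by simp)).eventually_lt_const one_pos
  obtain ⟨ε, hε, hball⟩ := Metric.nhds_basis_closedBall.eventually_iff.1 hsmall
  have haI : a ∈ Metric.closedBall a ε := Metric.mem_closedBall_self hε.le
  obtain ⟨m, hm, hmax⟩ :=
    (isCompact_closedBall a ε).exists_isMaxOn ⟨a, haI⟩ hu.norm.continuousOn
  have hle : ‖u m‖ ≤ |∫ t in a..m, ‖g t‖ ∂μ| * ‖u m‖ := calc
    ‖u m‖ ≤ |∫ t in a..m, g t * ‖u t‖ ∂μ| := h m
    _ ≤ |∫ t in a..m, ‖g t‖ * ‖u m‖ ∂μ| := by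
      rw [← Real.norm_eq_abs (∫ t in a..m, g t * ‖u t‖ ∂μ)]
      refine intervalIntegral.norm_integral_le_abs_of_norm_le ?_ ((hgi a m).mul_const _)
      refine ae_restrict_of_forall_mem measurableSet_uIoc fun t ht => ?_
      have htI : t ∈ Metric.closedBall a ε :=
        (convex_closedBall a ε).ordConnected.uIcc_subset haI hm (uIoc_subset_uIcc ht)
      rw [norm_mul, norm_norm]
      exact mul_le_mul_of_nonneg_left (hmax htI) (norm_nonneg _)
    _ = |∫ t in a..m, ‖g t‖ ∂μ| * ‖u m‖ := by
      rw [intervalIntegral.integral_mul_const, abs_mul, abs_norm]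
  have hm0 : ‖u m‖ ≤ 0 := by nlinarith [hball hm, norm_nonneg (u m)]
  filter_upwards [Metric.closedBall_mem_nhds a hε] with x hx
  exact norm_le_zero_iff.1 ((hmax hx).trans hm0)

theorem eq_zero_of_norm_sub_le_integral (hg : LocallyIntegrable g μ) (hu : Continuous u)
    (h : ∀ x y, ‖u y - u x‖ ≤ |∫ t in x..y, g t * ‖u t‖ ∂μ|) {a : ℝ} (ha : u a = 0) : u = 0 := by
  have hopen : IsOpen {x | u x = 0} := isOpen_iff_eventually.2 fun b (hb : u b = 0) =>
    eventually_eq_zero_of_norm_le_integral hg hu fun x => by simpa only [hb, sub_zero] using h b x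
  have huniv : {x | u x = 0} = univ :=
    IsClopen.eq_univ ⟨isClosed_eq hu continuous_const, hopen⟩ ⟨a, ha⟩
  exact funext (eq_univ_iff_forall.1 huniv)

end Gronwall

theorem ae_ne_of_hasDerivAt_ne_zero {F : Type*} [NormedAddCommGroup F] [NormedSpace ℝ F]
    {μ : Measure ℝ} [NullSingletonClass μ] {f f' : ℝ → F} {c : F}
    (hf : ∀ x, HasDerivAt f (f' x) x) (hf' : ∀ x, f x = c → f' x ≠ 0) : ∀ᵐ x ∂μ, f x ≠ c := by
  have hcod : {x | f x ≠ c} ∈ codiscrete ℝ := by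
    rw [mem_codiscrete]
    intro x
    rw [disjoint_principal_right, compl_compl]
    by_cases hx : f x = c
    · exact (hf x).eventually_ne (hf' x hx)
    · exact ((hf x).continuousAt.eventually_ne hx).filter_mono nhdsWithin_le_nhds
  have hae := ae_restrict_le_codiscreteWithin (μ := μ) MeasurableSet.univ hcod
  rwa [Measure.restrict_univ] at hae

/-- `φ` is a (Carathéodory) solution of the zero-energy equation `φ'' = V φ` with derivative `φ'`.
Absolute continuity of `φ'` together with `φ'' = V φ` almost everywhere is encoded by the integrated
equation, which has this meaning when `V` is locally integrable. -/
structure IsZeroEnergySolution {𝕜 E : Type*} [NormedField 𝕜] [NormedAddCommGroup E]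
    [NormedSpace ℝ E] [NormedSpace 𝕜 E] (V : ℝ → 𝕜) (φ φ' : ℝ → E) : Prop where
  hasDerivAt : ∀ x, HasDerivAt φ (φ' x) x
  deriv_eq : ∀ x, φ' x = φ' 0 + ∫ t in (0 : ℝ)..x, V t • φ t

namespace IsZeroEnergySolution

variable {𝕜 E : Type*} [NormedField 𝕜] [NormedAddCommGroup E] [NormedSpace ℝ E] [NormedSpace 𝕜 E]
  {V W : ℝ → 𝕜} {φ φ' ψ' : ℝ → E}

theorem neg (h : IsZeroEnergySolution V φ φ') :
    IsZeroEnergySolution V (fun x => -φ x) (fun x => -φ' x) where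
  hasDerivAt x := (h.hasDerivAt x).neg
  deriv_eq x := by
    simp only [smul_neg, intervalIntegral.integral_neg]
    rw [h.deriv_eq x, neg_add]

theorem comp_neg (h : IsZeroEnergySolution V φ φ') :
    IsZeroEnergySolution (fun x => V (-x)) (fun x => φ (-x)) (fun x => -φ' (-x)) where
  hasDerivAt x := by
    simpa only [Function.comp_def, neg_smul, one_smul] using
      (h.hasDerivAt (-x)).scomp x (hasDerivAt_neg x)
  deriv_eq x := by
    rw [intervalIntegral.integral_comp_neg fun t => V t • φ t, intervalIntegral.integral_symm,
      h.deriv_eq (-x), neg_zero, neg_add]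

theorem exists_comp_neg_of_even_or_odd (h : IsZeroEnergySolution V φ φ')
    (hpar : (∀ x, φ (-x) = φ x) ∨ (∀ x, φ (-x) = -φ x)) :
    ∃ ψ', IsZeroEnergySolution (fun x => V (-x)) φ ψ' := by
  rcases hpar with heven | hodd
  · exact ⟨_, by simpa only [heven] using h.comp_neg⟩
  · exact ⟨_, by simpa only [hodd, neg_neg] using h.comp_neg.neg⟩

theorem continuous (h : IsZeroEnergySolution V φ φ') : Continuous φ :=
  continuous_iff_continuousAt.2 fun x => (h.hasDerivAt x).continuousAt

theorem locallyIntegrable_smul (h : IsZeroEnergySolution V φ φ') (hV : LocallyIntegrable V) :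
    LocallyIntegrable (fun t => V t • φ t) :=
  hV.smul_continuous h.continuous

theorem intervalIntegrable_smul (h : IsZeroEnergySolution V φ φ') (hV : LocallyIntegrable V)
    (a b : ℝ) : IntervalIntegrable (fun t => V t • φ t) volume a b :=
  intervalIntegrable_of_locallyIntegrable (h.locallyIntegrable_smul hV) a b

theorem continuous_deriv (h : IsZeroEnergySolution V φ φ') (hV : LocallyIntegrable V) :
    Continuous φ' := by
  rw [funext h.deriv_eq]
  exact continuous_const.add
    (intervalIntegral.continuous_primitive (h.intervalIntegrable_smul hV) 0)

theorem integral_smul_eq_deriv_sub (h : IsZeroEnergySolution V φ φ') (hV : LocallyIntegrable V)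
    (a b : ℝ) : ∫ t in a..b, V t • φ t = φ' b - φ' a := by
  rw [h.deriv_eq a, h.deriv_eq b, add_sub_add_left_eq_sub,
    intervalIntegral.integral_interval_sub_left] <;>
    exact h.intervalIntegrable_smul hV _ _

variable [CompleteSpace E]

theorem norm_prodMk_sub_le (h : IsZeroEnergySolution V φ φ') (hV : LocallyIntegrable V) (x y : ℝ) :
    ‖(φ y, φ' y) - (φ x, φ' x)‖ ≤ |∫ t in x..y, (1 + ‖V t‖) * ‖(φ t, φ' t)‖| := by
  have hφ' := h.continuous_deriv hV
  have hbound : IntervalIntegrable (fun t => (1 + ‖V t‖) * ‖(φ t, φ' t)‖) volume x y :=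
    intervalIntegrable_of_locallyIntegrable
      (((locallyIntegrable_const (1 : ℝ)).add (locallyIntegrable_norm hV)).smul_continuous
        (h.continuous.prodMk hφ').norm) x y
  rw [Prod.mk_sub_mk, ← h.integral_smul_eq_deriv_sub hV,
    ← intervalIntegral.integral_eq_sub_of_hasDerivAt (fun t _ => h.hasDerivAt t)
      (hφ'.intervalIntegrable x y)]
  refine norm_prod_le_iff.2 ⟨?_, ?_⟩ <;>
    refine intervalIntegral.norm_integral_le_abs_of_norm_le (ae_of_all _ fun t => ?_) hbound
  · calc ‖φ' t‖ ≤ ‖(φ t, φ' t)‖ := norm_snd_le (φ t, φ' t)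
      _ ≤ (1 + ‖V t‖) * ‖(φ t, φ' t)‖ :=
        le_mul_of_one_le_left (norm_nonneg _) (le_add_of_nonneg_right (norm_nonneg _))
  · calc ‖V t • φ t‖ = ‖V t‖ * ‖φ t‖ := norm_smul _ _
      _ ≤ (1 + ‖V t‖) * ‖(φ t, φ' t)‖ :=
        mul_le_mul (le_add_of_nonneg_left zero_le_one) (norm_fst_le (φ t, φ' t)) (norm_nonneg _)
          (by positivity)

theorem eq_zero_of_eq_zero_of_deriv_eq_zero (h : IsZeroEnergySolution V φ φ')
    (hV : LocallyIntegrable V) {a : ℝ} (ha : φ a = 0) (ha' : φ' a = 0) : φ = 0 := by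
  have hpair : (fun t => (φ t, φ' t)) = 0 :=
    eq_zero_of_norm_sub_le_integral ((locallyIntegrable_const 1).add (locallyIntegrable_norm hV))
      (h.continuous.prodMk (h.continuous_deriv hV)) (h.norm_prodMk_sub_le hV)
      (Prod.mk_eq_zero.2 ⟨ha, ha'⟩)
  exact funext fun x => congrArg Prod.fst (congrFun hpair x)

theorem ae_ne_zero (h : IsZeroEnergySolution V φ φ') (hV : LocallyIntegrable V) (hφ : φ ≠ 0) :
    ∀ᵐ x, φ x ≠ 0 :=
  ae_ne_of_hasDerivAt_ne_zero h.hasDerivAt fun _ ha ha' =>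
    hφ (h.eq_zero_of_eq_zero_of_deriv_eq_zero hV ha ha')

theorem ae_hasDerivAt_deriv (h : IsZeroEnergySolution V φ φ') (hV : LocallyIntegrable V) :
    ∀ᵐ x, HasDerivAt φ' (V x • φ x) x := by
  filter_upwards [LocallyIntegrable.ae_hasDerivAt_integral (h.locallyIntegrable_smul hV)] with x hx
  rw [funext h.deriv_eq]
  exact (hx 0).const_add _

theorem potential_ae_eq (hφV : IsZeroEnergySolution V φ φ') (hφW : IsZeroEnergySolution W φ ψ')
    (hV : LocallyIntegrable V) (hW : LocallyIntegrable W) (hφ : φ ≠ 0) : V =ᵐ[volume] W := by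
  obtain rfl : φ' = ψ' := funext fun x => (hφV.hasDerivAt x).unique (hφW.hasDerivAt x)
  filter_upwards [hφV.ae_ne_zero hV hφ, hφV.ae_hasDerivAt_deriv hV, hφW.ae_hasDerivAt_deriv hW]
    with x hx hVx hWx
  exact smul_left_injective 𝕜 hx (hVx.unique hWx)

end IsZeroEnergySolution

theorem statement_4_general {𝕜 E : Type*} [NormedField 𝕜] [NormedAddCommGroup E] [NormedSpace ℝ E]
    [NormedSpace 𝕜 E] [CompleteSpace E] {V : ℝ → 𝕜} {φ φ' : ℝ → E} (hV : LocallyIntegrable V)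
    (h : IsZeroEnergySolution V φ φ') (hφ : φ ≠ 0)
    (hpar : (∀ x, φ (-x) = φ x) ∨ (∀ x, φ (-x) = -φ x)) : ∀ᵐ x, V (-x) = V x := by
  obtain ⟨ψ', hψ⟩ := h.exists_comp_neg_of_even_or_odd hpar
  have hVneg : LocallyIntegrable (fun x => V (-x)) := by
    refine (locallyIntegrable_map_homeomorph (Homeomorph.neg ℝ)).1 ?_
    simpa only [Homeomorph.coe_neg, Measure.map_neg_eq_self] using hV
  exact hψ.potential_ae_eq h hVneg hV hφ

/-- If `φ` is a bounded, not identically zero, zero-energy solution (`φ'` absolutely continuous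
with `φ'' = Vφ` a.e., encoded by the integral identity for the everywhere-derivative `φd`) which is
either even or odd, then `V` is even almost everywhere. -/
theorem statement_4 (V : ℝ → ℝ) (hVmeas : Measurable V)
    (hVint : Integrable (fun y : ℝ => jap y * |V y|))
    (φ φd : ℝ → ℝ)
    (hbd : ∃ B : ℝ, ∀ x, |φ x| ≤ B)
    (hnz : ¬ ∀ x, φ x = 0)
    (hderiv : ∀ x, HasDerivAt φ (φd x) x)
    (hode : ∀ x, φd x = φd 0 + ∫ t in (0:ℝ)..x, V t * φ t)
    (hpar : (∀ x, φ (-x) = φ x) ∨ (∀ x, φ (-x) = - φ x)) :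
    ∀ᵐ x ∂(volume : Measure ℝ), V (-x) = V x :=
  statement_4_general
    (integrable_of_integrable_jap_mul_norm hVmeas.aestronglyMeasurable hVint).locallyIntegrable
    ⟨hderiv, hode⟩ (fun hφ => hnz (congrFun hφ)) hpar
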